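/- Fix an integer k ≥ 416. Let G be a finite simple graph, L a 10-assignment for G, and α, β two L-colorings of G. Suppose G contains six distinct vertices a, b, c, d, e, f with ab, bc, cd, de, ef, ac, bd, ce edges of G, d_G(a) = d_G(f) = 5, and d_G(b) = d_G(c) = d_G(d) = d_G(e) = 6. Let S = {a, b, c, d, e, f}. If there exists a k-good recoloring sequence in G − S from the restriction of α to G − S to the restriction of β to G − S, then there exists a k-good recoloring sequence in G from α to β. -/

import Mathlib

def IsLColoring {V : Type} (G : SimpleGraph V) (L : V → Finset ℕ) (φ : V → ℕ) : Prop :=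
  (∀ v, φ v ∈ L v) ∧ ∀ ⦃u w : V⦄, G.Adj u w → φ u ≠ φ w

def recolorCount {V : Type} {m : ℕ} (φ : Fin (m + 1) → V → ℕ) (v : V) : ℕ :=
  (Finset.univ.filter fun i : Fin m => φ i.castSucc v ≠ φ i.succ v).card

def IsRecolSeq {V : Type} (G : SimpleGraph V) (L : V → Finset ℕ) {m : ℕ}
    (φ : Fin (m + 1) → V → ℕ) (α β : V → ℕ) : Prop :=
  φ 0 = α ∧ φ (Fin.last m) = β ∧ (∀ i, IsLColoring G L (φ i)) ∧
    ∀ i : Fin m, ∃! v : V, φ i.castSucc v ≠ φ i.succ v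

set_option linter.unusedSectionVars false
set_option linter.unusedSimpArgs false
set_option maxHeartbeats 1000000

inductive Reach {V : Type} [DecidableEq V] (G : SimpleGraph V) (L : V → Finset ℕ) :
    (V → ℕ) → (V → ℕ) → (V → ℕ) → Prop
  | refl (φ : V → ℕ) : IsLColoring G L φ → Reach G L φ φ 0
  | step (φ ψ n : V → ℕ) (v : V) (x : ℕ) : IsLColoring G L φ → x ≠ φ v →
      Reach G L (Function.update φ v x) ψ n → Reach G L φ ψ (Pi.single v 1 + n)

section aux

variable {V : Type} [Fintype V] [DecidableEq V] {G : SimpleGraph V} [DecidableRel G.Adj]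
  {L : V → Finset ℕ}

theorem Reach.left {φ ψ n : V → ℕ} (h : Reach G L φ ψ n) : IsLColoring G L φ := by
  cases h <;> assumption

theorem Reach.right {φ ψ n : V → ℕ} (h : Reach G L φ ψ n) : IsLColoring G L ψ := by
  induction h <;> assumption

theorem Reach.trans {φ ψ χ n m : V → ℕ} (h : Reach G L φ ψ n) (h' : Reach G L ψ χ m) :
    Reach G L φ χ (n + m) := by
  induction h with
  | refl φ _ => simpa using h'
  | step φ ψ n v x hc hx _ ih =>
    rw [add_assoc]
    exact Reach.step _ _ _ v x hc hx (ih h')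

theorem Reach.single {φ : V → ℕ} {v : V} {x : ℕ} (h : IsLColoring G L φ) (hx : x ≠ φ v)
    (h' : IsLColoring G L (Function.update φ v x)) :
    Reach G L φ (Function.update φ v x) (Pi.single v 1) := by
  simpa using Reach.step φ _ 0 v x h hx (Reach.refl _ h')

theorem Reach.toSeq {φ ψ n : V → ℕ} (h : Reach G L φ ψ n) :
    ∃ (M : ℕ) (θ : Fin (M + 1) → V → ℕ),
      IsRecolSeq G L θ φ ψ ∧ ∀ u : V, recolorCount θ u = n u := by
  induction h with
  | refl φ h =>
    refine ⟨0, fun _ => φ, ⟨rfl, rfl, fun _ => h, fun i => i.elim0⟩, fun u => ?_⟩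
    simp [recolorCount]
  | step φ ψ n v x hc hx _ ih =>
    obtain ⟨M, θ, ⟨h0, hl, hcol, hex⟩, hcnt⟩ := ih
    refine ⟨M + 1, Fin.cons φ θ, ⟨rfl, ?_, ?_, ?_⟩, ?_⟩
    · rw [← Fin.succ_last, Fin.cons_succ, hl]
    · intro i
      refine Fin.cases ?_ (fun j => ?_) i
      · simpa using hc
      · simpa using hcol j
    · intro i
      refine Fin.cases ?_ (fun j => ?_) i
      · refine ⟨v, ?_, ?_⟩
        · simp [h0, Ne.symm hx]
        · intro u hu
          by_contra hne
          simp [h0, hne] at hu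
      · have := hex j
        rw [← Fin.succ_castSucc, Fin.cons_succ, Fin.cons_succ]
        exact this
    · intro u
      have := hcnt u
      unfold recolorCount at this ⊢
      rw [Fin.card_filter_univ_succ]
      simp only [← Fin.succ_castSucc, Fin.cons_succ]
      have h2 : (Fin.cons φ θ : Fin (M + 2) → V → ℕ) (Fin.castSucc 0) = φ := rfl
      rw [h2, h0, this]
      by_cases huv : u = v
      · subst huv
        simp [Ne.symm hx]; omega
      · simp [huv]

/-- validity of a list of outside recolorings -/
def Valid (G : SimpleGraph V) (L : V → Finset ℕ) (S : Finset V) (β : V → ℕ) :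
    List (V × ℕ) → (V → ℕ) → Prop
  | [], φ => ∀ u, u ∉ S → φ u = β u
  | p :: E, φ => p.1 ∉ S ∧ p.2 ∈ L p.1 ∧ p.2 ≠ φ p.1 ∧
      (∀ u, u ∉ S → G.Adj p.1 u → φ u ≠ p.2) ∧ Valid G L S β E (Function.update φ p.1 p.2)

theorem Valid.congr {S : Finset V} {β : V → ℕ} {E : List (V × ℕ)} {φ ψ : V → ℕ}
    (h : Valid G L S β E φ) (he : ∀ u, u ∉ S → ψ u = φ u) : Valid G L S β E ψ := by
  induction E generalizing φ ψ with
  | nil => intro u hu; rw [he u hu]; exact h u hu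
  | cons p E ih =>
    obtain ⟨h1, h2, h3, h4, h5⟩ := h
    refine ⟨h1, h2, by rwa [he _ h1], fun u hu ha => by rw [he u hu]; exact h4 u hu ha, ?_⟩
    refine ih h5 fun u hu => ?_
    by_cases hup : u = p.1
    · subst hup; simp
    · simp [hup, he u hu]

def cnt (E : List (V × ℕ)) (u : V) : ℕ := E.countP (fun p => p.1 = u)

theorem exists_events (S : Finset V) (T : Set V) (hT : ∀ u, u ∈ T ↔ u ∉ S) (β : V → ℕ) (m : ℕ) :
    ∀ (φ : Fin (m + 1) → ↥T → ℕ) (α : V → ℕ),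
      IsRecolSeq (G.induce T) (fun u => L u.1) φ (fun u => α u.1) (fun u => β u.1) →
      ∃ E, Valid G L S β E α ∧ ∀ u : ↥T, cnt E u.1 = recolorCount φ u := by
  induction m with
  | zero =>
    intro φ α ⟨h0, hl, _, _⟩
    refine ⟨[], fun u hu => ?_, fun u => by simp [cnt, recolorCount]⟩
    have h1 := congrFun h0 ⟨u, (hT u).2 hu⟩
    have h2 := congrFun hl ⟨u, (hT u).2 hu⟩
    simp at h1 h2
    rw [← h1, ← h2]
  | succ m ih =>
    intro φ α ⟨h0, hl, hcol, hex⟩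
    obtain ⟨⟨v, hv⟩, hv1, hv2⟩ := hex 0
    have hst : ∀ u : ↥T, φ (Fin.succ 0) u =
        Function.update α v (φ (Fin.succ 0) ⟨v, hv⟩) u.1 := by
      intro u
      by_cases huv : u.1 = v
      · subst huv; simp
      · have : ¬ (φ (Fin.castSucc 0) u ≠ φ (Fin.succ 0) u) := fun h =>
          huv (congrArg Subtype.val (hv2 u h))
        simp only [ne_eq, not_not] at this
        rw [← this, Fin.castSucc_zero, h0]
        simp [huv]
    obtain ⟨E, hE, hc⟩ := ih (fun i => φ i.succ) (Function.update α v (φ (Fin.succ 0) ⟨v, hv⟩))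
      ⟨funext hst, by rw [← hl]; rfl, fun i => hcol _, fun i => hex i.succ⟩
    have hv1' : α v ≠ φ (Fin.succ 0) ⟨v, hv⟩ := by
      have : φ (Fin.castSucc 0) ⟨v, hv⟩ = α v := by rw [Fin.castSucc_zero, h0]
      rw [← this]; exact hv1
    refine ⟨(v, φ (Fin.succ 0) ⟨v, hv⟩) :: E, ⟨(hT v).1 hv, (hcol _).1 ⟨v, hv⟩, hv1'.symm, ?_, hE⟩, ?_⟩
    · intro u hu ha
      have h1 := (hcol (Fin.succ 0)).2 (u := ⟨v, hv⟩) (w := ⟨u, (hT u).2 hu⟩) ha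
      have h2 := hst ⟨u, (hT u).2 hu⟩
      rw [Function.update_of_ne (by exact (G.ne_of_adj ha).symm)] at h2
      intro h3
      apply h1
      rw [h2]
      exact h3.symm
    · intro u
      have h1 := hc u
      unfold recolorCount at h1 ⊢
      rw [Fin.card_filter_univ_succ]
      unfold cnt at h1 ⊢
      rw [List.countP_cons, h1]
      by_cases huv : u = ⟨v, hv⟩
      · subst huv
        rw [if_pos (by simp), if_pos hv1]
        rfl
      · have e1 : ¬ (decide (v = u.1) = true) := by
          simp only [decide_eq_true_eq]
          intro h; exact huv (Subtype.ext h.symm)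
        have e2 : ¬ (φ (Fin.castSucc 0) u ≠ φ (Fin.succ 0) u) := fun h => huv (hv2 u h)
        rw [if_neg e1, if_neg e2]
        rfl

theorem pick (hL : ∀ u, (L u).card = 10) (φ : V → ℕ) (v : V) (N : Finset V) (F : Finset ℕ)
    (h : N.card + F.card ≤ 9) : ∃ x ∈ L v, (∀ t ∈ N, φ t ≠ x) ∧ x ∉ F := by
  have h1 : (N.image φ ∪ F).card < (L v).card := by
    have := Finset.card_union_le (N.image φ) F
    have := Finset.card_image_le (s := N) (f := φ)
    have := hL v
    omega
  obtain ⟨x, hx, hx'⟩ := Finset.exists_mem_notMem_of_card_lt_card h1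
  simp only [Finset.mem_union, Finset.mem_image, not_or, not_exists, not_and] at hx'
  exact ⟨x, hx, hx'.1, hx'.2⟩

theorem recol {φ : V → ℕ} (h : IsLColoring G L φ) {v : V} {x : ℕ} (hx : x ∈ L v)
    (hn : ∀ t, G.Adj v t → φ t ≠ x) : IsLColoring G L (Function.update φ v x) := by
  refine ⟨fun u => ?_, fun u w ha => ?_⟩
  · by_cases hu : u = v
    · subst hu; simpa using hx
    · simpa [hu] using h.1 u
  · by_cases hu : u = v
    · subst hu
      have : w ≠ u := (G.ne_of_adj ha).symm
      simpa [this] using (hn w ha).symm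
    · by_cases hw : w = v
      · subst hw
        simpa [hu] using hn u ha.symm
      · simpa [hu, hw] using h.2 ha

/-! ### final phase -/

theorem clear_nbrs (hL : ∀ u, (L u).card = 10) (y : ℕ) (T : Finset V)
    (hT : ∀ t ∈ T, G.degree t ≤ 8) (φ : V → ℕ) (h : IsLColoring G L φ) :
    ∃ ψ n, Reach G L φ ψ n ∧ (∀ t ∈ T, ψ t ≠ y) ∧ (∀ t, n t ≤ 1) ∧
      (∀ t, t ∉ T ∨ φ t ≠ y → n t = 0 ∧ ψ t = φ t) := by
  induction T using Finset.induction_on with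
  | empty => exact ⟨φ, 0, Reach.refl _ h, by simp, by simp, by simp⟩
  | insert a T haT ih =>
    obtain ⟨ψ, n, hr, h1, h2, h3⟩ := ih fun t ht => hT t (Finset.mem_insert_of_mem ht)
    obtain ⟨hn, hψ⟩ := h3 a (Or.inl haT)
    by_cases hy : ψ a = y
    · obtain ⟨x, hx, hx1, hx2⟩ := pick hL ψ a (G.neighborFinset a) {y} (by
        have := hT a (Finset.mem_insert_self _ _)
        rw [G.card_neighborFinset_eq_degree]; simp; omega)
      simp only [SimpleGraph.mem_neighborFinset, Finset.mem_singleton] at hx1 hx2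
      have hc := recol hr.right hx hx1
      refine ⟨_, _, hr.trans (Reach.single hr.right (by rwa [hy]) hc), ?_, ?_, ?_⟩
      · intro t ht
        by_cases hta : t = a
        · subst hta; simpa using hx2
        · simpa [hta] using h1 t (by simpa [hta] using ht)
      · intro t
        by_cases hta : t = a
        · subst hta; simp [hn]
        · simpa [hta] using h2 t
      · intro t ht
        by_cases hta : t = a
        · subst hta; simp [← hψ, hy] at ht
        · simpa [hta] using h3 t (by simpa [hta] using ht)
    · refine ⟨ψ, n, hr, ?_, h2, ?_⟩
      · intro t ht
        rcases Finset.mem_insert.1 ht with rfl | ht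
        · exact hy
        · exact h1 t ht
      · intro t ht
        by_cases hta : t = a
        · subst hta; exact ⟨hn, hψ⟩
        · exact h3 t (by simpa [hta] using ht)

theorem fix_one (hL : ∀ u, (L u).card = 10) (β : V → ℕ) (hβ : IsLColoring G L β) (v : V)
    (F : V → Prop) (hF : ∀ t, ¬ F t → G.degree t ≤ 8) (hv : ¬ F v)
    (φ : V → ℕ) (h : IsLColoring G L φ) (hφ : ∀ u, F u → φ u = β u) :
    ∃ ψ n, Reach G L φ ψ n ∧ (∀ t, F t → ψ t = β t) ∧ ψ v = β v ∧ (∀ t, n t ≤ 1) ∧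
      (∀ t, F t → n t = 0) := by
  classical
  by_cases hvv : φ v = β v
  · exact ⟨φ, 0, Reach.refl _ h, hφ, hvv, by simp, by simp⟩
  obtain ⟨ψ, n, hr, h1, h2, h3⟩ := clear_nbrs hL (β v) ((G.neighborFinset v).filter fun t => ¬ F t)
    (fun t ht => hF t (Finset.mem_filter.1 ht).2) φ h
  have h4 : ∀ t, F t → n t = 0 ∧ ψ t = φ t := fun t ht =>
    h3 t (Or.inl fun h => (Finset.mem_filter.1 h).2 ht)
  obtain ⟨hnv, hψv⟩ := h3 v (Or.inl (by simp))
  have hc : IsLColoring G L (Function.update ψ v (β v)) := by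
    refine recol hr.right (hβ.1 v) fun t ht => ?_
    by_cases hFt : F t
    · rw [(h4 t hFt).2, hφ t hFt]; exact (hβ.2 ht).symm
    · exact h1 t (by simp [ht, hFt])
  refine ⟨_, _, hr.trans (Reach.single hr.right (by rw [hψv]; exact Ne.symm hvv) hc),
    ?_, by simp, ?_, ?_⟩
  · intro t ht
    have : t ≠ v := by rintro rfl; exact hv ht
    simp [this, (h4 t ht).2, hφ t ht]
  · intro t
    by_cases hta : t = v
    · subst hta; simp [hnv]
    · simpa [hta] using h2 t
  · intro t ht
    have : t ≠ v := by rintro rfl; exact hv ht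
    simp [this, (h4 t ht).1]

theorem final_phase (hL : ∀ u, (L u).card = 10) (β : V → ℕ) (hβ : IsLColoring G L β) (l : List V)
    (hnd : l.Nodup) (hF : ∀ t ∈ l, G.degree t ≤ 8)
    (φ : V → ℕ) (h : IsLColoring G L φ) (hφ : ∀ u, u ∉ l → φ u = β u) :
    ∃ n, Reach G L φ β n ∧ (∀ u, u ∉ l → n u = 0) ∧ ∀ i (hi : i < l.length), n l[i] ≤ i + 1 := by
  induction l generalizing φ with
  | nil =>
    have : φ = β := funext fun u => hφ u (by simp)
    subst this
    exact ⟨0, Reach.refl _ h, by simp, by simp⟩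
  | cons v l ih =>
    rw [List.nodup_cons] at hnd
    obtain ⟨ψ, n, hr, h1, h2, h3, h4⟩ := fix_one hL β hβ v (fun u => u ∉ v :: l)
      (fun t ht => hF t (not_not.1 ht)) (by simp) φ h hφ
    obtain ⟨m, hm, hm1, hm2⟩ := ih hnd.2 (fun t ht => hF t (List.mem_cons_of_mem _ ht)) ψ hr.right
      (fun u hu => by
        by_cases huv : u = v
        · subst huv; exact h2
        · exact h1 u (by simp [huv, hu]))
    refine ⟨_, hr.trans hm, fun u hu => ?_, fun i hi => ?_⟩
    · have := h4 u hu
      have := hm1 u (fun h => hu (List.mem_cons_of_mem _ h))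
      simp; omega
    · cases i with
      | zero =>
        have := h3 v
        have := hm1 v hnd.1
        simp; omega
      | succ i =>
        have hi' : i < l.length := by simpa using hi
        have := h3 l[i]
        have := hm2 i hi'
        simp; omega

/-! ### main phase -/

def rel (G : SimpleGraph V) [DecidableRel G.Adj] (E : List (V × ℕ)) (v : V) : List ℕ :=
  (E.filter (fun p => decide (G.Adj v p.1))).map Prod.snd

theorem rel_cons_pos {E : List (V × ℕ)} {v : V} {p : V × ℕ} (h : G.Adj v p.1) :
    rel G (p :: E) v = p.2 :: rel G E v := by
  simp [rel, h]

theorem rel_cons_neg {E : List (V × ℕ)} {v : V} {p : V × ℕ} (h : ¬ G.Adj v p.1) :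
    rel G (p :: E) v = rel G E v := by
  simp [rel, h]

theorem rel_length {S : Finset V} {β : V → ℕ} {E : List (V × ℕ)} {φ : V → ℕ}
    (h : Valid G L S β E φ) (v : V) :
    (rel G E v).length ≤ ∑ u ∈ G.neighborFinset v \ S, cnt E u := by
  induction E generalizing φ with
  | nil => simp [rel]
  | cons p E ih =>
    have h1 := ih h.2.2.2.2
    have hc : ∀ u, cnt (p :: E) u = cnt E u + if p.1 = u then 1 else 0 := by
      intro u; simp [cnt, List.countP_cons]
    simp only [hc, Finset.sum_add_distrib]
    by_cases ha : G.Adj v p.1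
    · rw [rel_cons_pos ha, Finset.sum_ite_eq, if_pos (by simp [ha, h.1])]
      simpa using h1
    · rw [rel_cons_neg ha]; omega

def Loc (G : SimpleGraph V) [DecidableRel G.Adj] (Q s R : V → ℕ) (E : List (V × ℕ)) (v : V)
    (c n q w X : ℕ) : Prop :=
  w ≤ s v + 1 ∧ c ∉ (rel G E v).take w ∧
    s v * n + (rel G E v).length + q ≤ w + R v + (s v + 2) * X ∧
    q ≤ Q v ∧ (q < Q v → n ≤ q + X)

def XX (S : Finset V) (h : V → V) (q : V → ℕ) (u : V) : ℕ := ∑ v ∈ S with h v = u, q v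

theorem XX_update {S : Finset V} {h : V → V} {q : V → ℕ} {v : V} (hv : v ∈ S) (u : V) :
    XX S h (Function.update q v (q v + 1)) u = XX S h q u + if u = h v then 1 else 0 := by
  unfold XX
  by_cases hu : u = h v
  · have hm : v ∈ S.filter (fun v => h v = u) := by simp [hv, hu]
    rw [Finset.sum_update_of_mem hm, ← Finset.add_sum_erase _ _ hm, if_pos hu,
      Finset.sdiff_singleton_eq_erase]
    omega
  · have hm : v ∉ S.filter (fun v => h v = u) := by simp [Ne.symm hu]
    rw [Finset.sum_update_of_notMem hm, if_neg hu]; rfl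

theorem fix_vertex (hL : ∀ u, (L u).card = 10) (S : Finset V) (h : V → V) (Q s R : V → ℕ)
    (hs : ∀ v ∈ S, G.degree v + s v = 9 ∧ 3 ≤ s v)
    (hh : ∀ v ∈ S, 0 < Q v → h v ∈ S ∧ G.Adj v (h v))
    (α : V → ℕ) (p : V × ℕ) (E : List (V × ℕ)) (φ n q w : V → ℕ)
    (hr : Reach G L α φ n)
    (hI : ∀ v ∈ S, Loc G Q s R (p :: E) v (φ v) (n v) (q v) (w v) (XX S h q v))
    (v : V) (hv : v ∈ S) (hvp : G.Adj v p.1) :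
    ∃ φ' n' q' w' : V → ℕ, Reach G L α φ' n' ∧
      (∀ v ∈ S, Loc G Q s R (p :: E) v (φ' v) (n' v) (q' v) (w' v) (XX S h q' v)) ∧
      (∀ u, u ∉ S → φ' u = φ u ∧ n' u = n u) ∧ 1 ≤ w' v ∧ (∀ u ∈ S, 1 ≤ w u → 1 ≤ w' u) := by
  obtain ⟨hw, hav, hpot, hq, hsm⟩ := hI v hv
  obtain ⟨hs1, hs2⟩ := hs v hv
  have hne : ∀ u, u ∉ S → u ≠ v := by rintro u hu rfl; exact hu hv
  have htk : ∀ (u : V) (i : ℕ), ((rel G (p :: E) u).take i).toFinset.card ≤ i := fun u i =>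
    (List.toFinset_card_le _).trans (List.length_take_le _ _)
  by_cases hw1 : 1 ≤ w v
  · exact ⟨φ, n, q, w, hr, hI, fun _ _ => ⟨rfl, rfl⟩, hw1, fun _ _ h => h⟩
  have hw0 : w v = 0 := by omega
  by_cases hy : φ v = p.2
  swap
  · -- no conflict
    refine ⟨φ, n, q, Function.update w v 1, hr, ?_, fun _ _ => ⟨rfl, rfl⟩, by simp, ?_⟩
    · intro u hu
      by_cases huv : u = v
      · subst huv
        rw [Function.update_self]
        refine ⟨by omega, ?_, by omega, hq, hsm⟩
        rw [rel_cons_pos hvp]; simpa using hy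
      · rw [Function.update_of_ne huv]; exact hI u hu
    · intro u hu h1
      by_cases huv : u = v
      · subst huv; simp
      · simpa [huv] using h1
  by_cases hqQ : q v < Q v
  swap
  · -- normal move
    obtain ⟨x, hx, hx1, hx2⟩ := pick hL φ v (G.neighborFinset v)
      ((rel G (p :: E) v).take (s v)).toFinset (by
        have := htk v (s v)
        rw [G.card_neighborFinset_eq_degree]; omega)
    simp only [SimpleGraph.mem_neighborFinset, List.mem_toFinset] at hx1 hx2
    have hxy : x ≠ φ v := by
      rintro rfl
      apply hx2
      rw [rel_cons_pos hvp, hy]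
      obtain ⟨j, hj⟩ : ∃ j, s v = j + 1 := ⟨s v - 1, by omega⟩
      rw [hj]; simp
    have hc := recol hr.right hx hx1
    refine ⟨_, _, q, Function.update w v (s v), hr.trans (Reach.single hr.right hxy hc),
      ?_, fun u hu => by simp [hne u hu], by simp; omega, ?_⟩
    · intro u hu
      by_cases huv : u = v
      · subst huv
        simp only [Function.update_self, Pi.add_apply, Pi.single_eq_same]
        refine ⟨by omega, hx2, ?_, hq, fun h => absurd h hqQ⟩
        rw [Nat.mul_add]; omega
      · simpa [huv] using hI u hu
    · intro u hu h1
      by_cases huv : u = v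
      · subst huv; simp; omega
      · simpa [huv] using h1
  -- special move
  obtain ⟨huS, hadj⟩ := hh v hv (by omega)
  set u := h v with hu
  have huv : u ≠ v := (G.ne_of_adj hadj).symm
  obtain ⟨hsu1, hsu2⟩ := hs u huS
  obtain ⟨hwu, havu, hpotu, hqu, hsmu⟩ := hI u huS
  have hXv : XX S h (Function.update q v (q v + 1)) v = XX S h q v := by
    rw [XX_update hv, if_neg (by rw [← hu]; exact huv.symm)]; omega
  have hXu : XX S h (Function.update q v (q v + 1)) u = XX S h q u + 1 := by
    rw [XX_update hv, if_pos hu]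
  have hXo : ∀ t, t ≠ u → XX S h (Function.update q v (q v + 1)) t = XX S h q t := by
    intro t ht
    rw [XX_update hv, if_neg (by rw [← hu]; exact ht)]; omega
  obtain ⟨x, hx, hx1, hx2⟩ := pick hL φ v ((G.neighborFinset v).erase u)
    ((rel G (p :: E) v).take (s v + 1)).toFinset (by
      have := htk v (s v + 1)
      rw [Finset.card_erase_of_mem (by simpa using hadj), G.card_neighborFinset_eq_degree]
      have : 0 < G.degree v := G.degree_pos_iff_exists_adj v |>.2 ⟨u, hadj⟩
      omega)
  simp only [Finset.mem_erase, SimpleGraph.mem_neighborFinset, List.mem_toFinset] at hx1 hx2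
  have hxy : x ≠ φ v := by
    rintro rfl
    apply hx2
    rw [rel_cons_pos hvp, hy]
    simp
  have hLv : Loc G Q s R (p :: E) v x (n v + 1) (q v + 1) (s v + 1) (XX S h q v) := by
    refine ⟨le_rfl, hx2, ?_, hqQ, fun _ => ?_⟩
    · rw [Nat.mul_add]; omega
    · have := hsm hqQ; omega
  by_cases hxu : φ u = x
  swap
  · -- the helper does not move
    have hc : IsLColoring G L (Function.update φ v x) := by
      refine recol hr.right hx fun t ht => ?_
      by_cases htu : t = u
      · rw [htu]; exact hxu
      · exact hx1 t ⟨htu, ht⟩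
    refine ⟨_, _, Function.update q v (q v + 1), Function.update w v (s v + 1),
      hr.trans (Reach.single hr.right hxy hc),
      ?_, fun t ht => by simp [hne t ht], by simp, ?_⟩
    · intro t ht
      by_cases htv : t = v
      · subst htv
        simpa [hXv] using hLv
      · by_cases htu : t = u
        · rw [htu, hXu]
          simp only [Function.update_of_ne huv, Pi.add_apply, Pi.single_eq_of_ne huv]
          refine ⟨hwu, havu, ?_, hqu, fun h => ?_⟩
          · rw [Nat.add_zero, Nat.mul_add (s u + 2)]; omega
          · have := hsmu h; omega
        · rw [hXo t htu]
          simpa [htv] using hI t ht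
    · intro t ht h1
      by_cases htv : t = v
      · subst htv; simp
      · simpa [htv] using h1
  · -- the helper moves first
    obtain ⟨z, hz, hz1, hz2⟩ := pick hL φ u (G.neighborFinset u)
      (insert (φ u) ((rel G (p :: E) u).take (s u - 1)).toFinset) (by
        have := htk u (s u - 1)
        have := Finset.card_insert_le (φ u) ((rel G (p :: E) u).take (s u - 1)).toFinset
        rw [G.card_neighborFinset_eq_degree]; omega)
    simp only [SimpleGraph.mem_neighborFinset, Finset.mem_insert, List.mem_toFinset,
      not_or] at hz1 hz2
    have hc1 := recol hr.right hz hz1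
    have hr1 := hr.trans (Reach.single hr.right hz2.1 hc1)
    have hc : IsLColoring G L (Function.update (Function.update φ u z) v x) := by
      refine recol hc1 hx fun t ht => ?_
      by_cases htu : t = u
      · rw [htu, Function.update_self, ← hxu]; exact hz2.1
      · rw [Function.update_of_ne htu]; exact hx1 t ⟨htu, ht⟩
    have hr2 := hr1.trans (Reach.single hr1.right
      (by rw [Function.update_of_ne huv.symm]; exact hxy) hc)
    have hneu : ∀ t, t ∉ S → t ≠ u := by rintro t ht rfl; exact ht huS
    refine ⟨_, _, Function.update q v (q v + 1),
      Function.update (Function.update w u (s u - 1)) v (s v + 1), hr2,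
      ?_, fun t ht => by simp [hne t ht, hneu t ht], by simp, ?_⟩
    · intro t ht
      by_cases htv : t = v
      · subst htv
        rw [hXv]
        simpa [huv.symm] using hLv
      · by_cases htu : t = u
        · rw [htu, hXu]
          simp only [Function.update_of_ne huv, Pi.add_apply, Pi.single_eq_of_ne huv,
            Function.update_self, Pi.single_eq_same]
          refine ⟨by omega, hz2.2, ?_, hqu, fun h => ?_⟩
          · rw [Nat.mul_add, Nat.mul_add, Nat.mul_add]; omega
          · have := hsmu h; omega
        · rw [hXo t htu]
          simpa [htv, htu] using hI t ht
    · intro t ht h1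
      by_cases htv : t = v
      · subst htv; simp
      · by_cases htu : t = u
        · rw [htu]; simp [huv]; omega
        · simpa [htv, htu] using h1

theorem fix_list (hL : ∀ u, (L u).card = 10) (S : Finset V) (h : V → V) (Q s R : V → ℕ)
    (hs : ∀ v ∈ S, G.degree v + s v = 9 ∧ 3 ≤ s v)
    (hh : ∀ v ∈ S, 0 < Q v → h v ∈ S ∧ G.Adj v (h v))
    (α : V → ℕ) (p : V × ℕ) (E : List (V × ℕ)) (l : List V) (hl : ∀ v ∈ l, v ∈ S)
    (φ n q w : V → ℕ)
    (hr : Reach G L α φ n)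
    (hI : ∀ v ∈ S, Loc G Q s R (p :: E) v (φ v) (n v) (q v) (w v) (XX S h q v)) :
    ∃ φ' n' q' w' : V → ℕ, Reach G L α φ' n' ∧
      (∀ v ∈ S, Loc G Q s R (p :: E) v (φ' v) (n' v) (q' v) (w' v) (XX S h q' v)) ∧
      (∀ u, u ∉ S → φ' u = φ u ∧ n' u = n u) ∧ (∀ v ∈ l, G.Adj v p.1 → 1 ≤ w' v) ∧
      (∀ u ∈ S, 1 ≤ w u → 1 ≤ w' u) := by
  induction l generalizing φ n q w with
  | nil => exact ⟨φ, n, q, w, hr, hI, fun _ _ => ⟨rfl, rfl⟩, by simp, fun _ _ h => h⟩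
  | cons v l ih =>
    have hl' : ∀ v ∈ l, v ∈ S := fun t ht => hl t (List.mem_cons_of_mem _ ht)
    have hvS := hl v (by simp)
    by_cases hvp : G.Adj v p.1
    · obtain ⟨φ1, n1, q1, w1, hr1, hI1, ho1, hw1, hk1⟩ :=
        fix_vertex hL S h Q s R hs hh α p E φ n q w hr hI v hvS hvp
      obtain ⟨φ2, n2, q2, w2, hr2, hI2, ho2, hw2, hk2⟩ := ih hl' φ1 n1 q1 w1 hr1 hI1
      refine ⟨φ2, n2, q2, w2, hr2, hI2, fun u hu => ?_, ?_, fun u hu h1 => hk2 u hu (hk1 u hu h1)⟩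
      · rw [(ho2 u hu).1, (ho2 u hu).2]; exact ho1 u hu
      · intro t ht hta
        rcases List.mem_cons.1 ht with rfl | ht
        · exact hk2 _ hvS hw1
        · exact hw2 t ht hta
    · obtain ⟨φ2, n2, q2, w2, hr2, hI2, ho2, hw2, hk2⟩ := ih hl' φ n q w hr hI
      refine ⟨φ2, n2, q2, w2, hr2, hI2, ho2, ?_, hk2⟩
      intro t ht hta
      rcases List.mem_cons.1 ht with rfl | ht
      · exact absurd hta hvp
      · exact hw2 t ht hta

theorem main_phase (hL : ∀ u, (L u).card = 10) (S : Finset V) (h : V → V) (Q s R : V → ℕ)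
    (hs : ∀ v ∈ S, G.degree v + s v = 9 ∧ 3 ≤ s v)
    (hh : ∀ v ∈ S, 0 < Q v → h v ∈ S ∧ G.Adj v (h v))
    (α β : V → ℕ) (E : List (V × ℕ)) (φ n q w : V → ℕ)
    (hr : Reach G L α φ n)
    (hI : ∀ v ∈ S, Loc G Q s R E v (φ v) (n v) (q v) (w v) (XX S h q v))
    (hV : Valid G L S β E φ) :
    ∃ φ' n' q' w' : V → ℕ, Reach G L α φ' n' ∧
      (∀ v ∈ S, Loc G Q s R [] v (φ' v) (n' v) (q' v) (w' v) (XX S h q' v)) ∧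
      (∀ u, u ∉ S → φ' u = β u ∧ n' u = n u + cnt E u) := by
  induction E generalizing φ n q w with
  | nil => exact ⟨φ, n, q, w, hr, hI, fun u hu => ⟨hV u hu, by simp [cnt]⟩⟩
  | cons p E ih =>
    obtain ⟨φ1, n1, q1, w1, hr1, hI1, ho1, hw1, hk1⟩ :=
      fix_list hL S h Q s R hs hh α p E S.toList (by simp) φ n q w hr hI
    obtain ⟨v1, v2, v3, v4, v5⟩ := hV.congr (fun u hu => (ho1 u hu).1)
    have hc : IsLColoring G L (Function.update φ1 p.1 p.2) := by
      refine recol hr1.right v2 fun t ht => ?_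
      by_cases htS : t ∈ S
      · have h1 := hw1 t (by simpa using htS) ht.symm
        have h2 := (hI1 t htS).2.1
        obtain ⟨j, hj⟩ : ∃ j, w1 t = j + 1 := ⟨w1 t - 1, by omega⟩
        rw [rel_cons_pos ht.symm, hj] at h2
        simp only [List.take_succ_cons, List.mem_cons, not_or] at h2
        exact h2.1
      · exact v4 t htS ht
    have hr2 := hr1.trans (Reach.single hr1.right v3 hc)
    obtain ⟨φ3, n3, q3, w3, hr3, hI3, ho3⟩ := ih _ _ q1
      (fun v => if G.Adj v p.1 then w1 v - 1 else w1 v) hr2 (by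
        intro t ht
        have htp : t ≠ p.1 := by rintro rfl; exact v1 ht
        obtain ⟨i1, i2, i3, i4, i5⟩ := hI1 t ht
        simp only [Function.update_of_ne htp, Pi.add_apply, Pi.single_eq_of_ne htp, Nat.add_zero]
        by_cases hta : G.Adj t p.1
        · rw [if_pos hta]
          have h1 := hw1 t (by simpa using ht) hta
          obtain ⟨j, hj⟩ : ∃ j, w1 t = j + 1 := ⟨w1 t - 1, by omega⟩
          rw [rel_cons_pos hta, hj] at i2
          simp only [List.take_succ_cons, List.mem_cons, not_or] at i2
          rw [rel_cons_pos hta, List.length_cons] at i3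
          rw [hj, Nat.add_sub_cancel]
          exact ⟨by omega, i2.2, by omega, i4, i5⟩
        · rw [if_neg hta]
          rw [rel_cons_neg hta] at i2 i3
          exact ⟨i1, i2, i3, i4, i5⟩) v5
    refine ⟨φ3, n3, q3, w3, hr3, hI3, fun u hu => ⟨(ho3 u hu).1, ?_⟩⟩
    rw [(ho3 u hu).2, Pi.add_apply, (ho1 u hu).2]
    have hcn : cnt (p :: E) u = cnt E u + if p.1 = u then 1 else 0 := by
      simp [cnt, List.countP_cons]
    rw [hcn]
    by_cases hup : u = p.1
    · subst hup; simp; omega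
    · simp [hup, Ne.symm hup]

theorem rel_bound {S : Finset V} {β : V → ℕ} {E : List (V × ℕ)} {φ : V → ℕ}
    (h : Valid G L S β E φ) (v : V) (k : ℕ) (hk : ∀ u, u ∉ S → cnt E u ≤ k)
    (I : Finset V) (hI : I ⊆ S) (hI2 : ∀ t ∈ I, G.Adj v t) (o : ℕ)
    (ho : G.degree v ≤ I.card + o) :
    (rel G E v).length ≤ o * k := by
  refine (rel_length h v).trans ?_
  have h1 : ∑ u ∈ G.neighborFinset v \ S, cnt E u ≤ (G.neighborFinset v \ S).card * k := by
    rw [← smul_eq_mul]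
    exact Finset.sum_le_card_nsmul _ _ _ fun u hu => hk u (Finset.mem_sdiff.1 hu).2
  refine h1.trans (Nat.mul_le_mul_right _ ?_)
  have h2 : (G.neighborFinset v \ S).card ≤ (G.neighborFinset v \ I).card :=
    Finset.card_le_card (Finset.sdiff_subset_sdiff le_rfl hI)
  have h3 : I ⊆ G.neighborFinset v := fun t ht => by simpa using hI2 t ht
  rw [Finset.card_sdiff_of_subset h3, G.card_neighborFinset_eq_degree] at h2
  omega

end aux

/-- configuration RC(d): if `G` contains this configuration and `G − S` has a
`k`-good recoloring sequence between the restrictions of `α` and `β` (`k ≥ 416`),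
then `G` has a `k`-good recoloring sequence from `α` to `β`. -/
theorem stmt_10 {V : Type} [Fintype V] [DecidableEq V]
    (G : SimpleGraph V) [DecidableRel G.Adj]
    (k : ℕ) (hk : 416 ≤ k)
    (L : V → Finset ℕ) (hL : ∀ u, (L u).card = 10)
    (α β : V → ℕ) (hα : IsLColoring G L α) (hβ : IsLColoring G L β)
    (a b c d e f : V) (hnodup : ([a, b, c, d, e, f] : List V).Nodup)
    (he1: G.Adj a b)
    (he2: G.Adj b c)
    (he3: G.Adj c d)
    (he4: G.Adj d e)
    (he5: G.Adj e f)
    (he6: G.Adj a c)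
    (he7: G.Adj b d)
    (he8: G.Adj c e)
    (hda : G.degree a = 5)
    (hdb : G.degree b = 6)
    (hdc : G.degree c = 6)
    (hdd : G.degree d = 6)
    (hde : G.degree e = 6)
    (hdf : G.degree f = 5)
    (S : Set V) (hS : S = {a, b, c, d, e, f})
    (hrec : ∃ (m : ℕ) (φ : Fin (m + 1) → ↥(Sᶜ) → ℕ),
      IsRecolSeq (G.induce Sᶜ) (fun u => L u.1) φ (fun u => α u.1) (fun u => β u.1) ∧
      ∀ u : ↥(Sᶜ), recolorCount φ u ≤ k) :
    ∃ (M : ℕ) (ψ : Fin (M + 1) → V → ℕ),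
      IsRecolSeq G L ψ α β ∧ ∀ u : V, recolorCount ψ u ≤ k := by
  obtain ⟨m, φ, hφ, hcnt⟩ := hrec
  set T : Finset V := {a, b, c, d, e, f} with hT
  have hST : ∀ u, u ∈ Sᶜ ↔ u ∉ T := by intro u; simp [hS, hT]
  obtain ⟨E, hE, hEc⟩ := exists_events T Sᶜ hST β m φ α hφ
  have hEk : ∀ u, u ∉ T → cnt E u ≤ k := fun u hu => by
    have := hEc ⟨u, (hST u).2 hu⟩
    simp only at this
    rw [this]; exact hcnt _
  have hnd := hnodup
  simp only [List.nodup_cons, List.mem_cons, List.not_mem_nil, or_false, not_or,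
    List.nodup_nil, and_true, not_false_eq_true] at hnodup
  obtain ⟨⟨nab, nac, nad, nae, naf⟩, ⟨nbc, nbd, nbe, nbf⟩, ⟨ncd, nce, ncf⟩, ⟨nde, ndf⟩, nef⟩ :=
    hnodup
  have nba := Ne.symm nab
  have nca := Ne.symm nac
  have nda := Ne.symm nad
  have nea := Ne.symm nae
  have nfa := Ne.symm naf
  have ncb := Ne.symm nbc
  have ndb := Ne.symm nbd
  have neb := Ne.symm nbe
  have nfb := Ne.symm nbf
  have ndc := Ne.symm ncd
  have nec := Ne.symm nce
  have nfc := Ne.symm ncf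
  have ned := Ne.symm nde
  have nfd := Ne.symm ndf
  have nfe := Ne.symm nef
  have hd8 : ∀ t ∈ [f, e, d, b, c, a], G.degree t ≤ 8 := by
    simp [hda, hdb, hdc, hdd, hde, hdf]
  have hnd2 : [f, e, d, b, c, a].Nodup := by
    simp [nab, nac, nad, nae, naf, nbc, nbd, nbe, nbf, ncd, nce, ncf, nde,
      ndf, nef, nba, nca, nda, nea, nfa, ncb, ndb, neb, nfb, ndc, nec, nfc, ned, nfd, nfe]
  -- parameters
  let h : V → V := fun v => if v = a then a else if v = f then e else c
  let Q : V → ℕ := fun v => if v = f then 6 else if v = e then 38 else if v = d then 11 else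
    if v = b then 14 else 0
  let s : V → ℕ := fun v => if v = a ∨ v = f then 4 else 3
  let R : V → ℕ := fun v => if v = f then 4 * k else if v = c then 2 * k else 3 * k
  have ha' : a ∈ T := by simp [hT]
  have hb' : b ∈ T := by simp [hT]
  have hc' : c ∈ T := by simp [hT]
  have hd' : d ∈ T := by simp [hT]
  have he' : e ∈ T := by simp [hT]
  have hf' : f ∈ T := by simp [hT]
  have hall : ∀ {P : V → Prop}, P a → P b → P c → P d → P e → P f → ∀ v ∈ T, P v := by
    intro P pa pb pc pd pe pf v hv
    simp only [hT, Finset.mem_insert, Finset.mem_singleton] at hv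
    rcases hv with rfl | rfl | rfl | rfl | rfl | rfl <;> assumption
  have hs : ∀ v ∈ T, G.degree v + s v = 9 ∧ 3 ≤ s v := by
    apply hall <;> simp [s, hda, hdb, hdc, hdd, hde, hdf, nab, nac, nad, nae, naf, nbc, nbd, nbe, nbf, ncd, nce, ncf, nde,
      ndf, nef, nba, nca, nda, nea, nfa, ncb, ndb, neb, nfb, ndc, nec, nfc, ned, nfd, nfe]
  have hh : ∀ v ∈ T, 0 < Q v → h v ∈ T ∧ G.Adj v (h v) := by
    apply hall
    · simp [Q, nab, nac, nad, nae, naf, nbc, nbd, nbe, nbf, ncd, nce, ncf, nde,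
      ndf, nef, nba, nca, nda, nea, nfa, ncb, ndb, neb, nfb, ndc, nec, nfc, ned, nfd, nfe]
    · intro _; simp only [h, if_neg nba, if_neg nbf]; exact ⟨hc', he2⟩
    · simp [Q, nab, nac, nad, nae, naf, nbc, nbd, nbe, nbf, ncd, nce, ncf, nde,
      ndf, nef, nba, nca, nda, nea, nfa, ncb, ndb, neb, nfb, ndc, nec, nfc, ned, nfd, nfe]
    · intro _; simp only [h, if_neg nda, if_neg ndf]; exact ⟨hc', he3.symm⟩
    · intro _; simp only [h, if_neg nea, if_neg nef]; exact ⟨hc', he8.symm⟩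
    · intro _; simp only [h, if_neg nfa, if_true]; exact ⟨he', he5.symm⟩
  have hR : ∀ v ∈ T, (rel G E v).length ≤ R v := by
    apply hall
    · simp only [R, if_neg naf, if_neg nac]
      refine rel_bound hE a k hEk {b, c} ?_ ?_ 3 ?_
      · simp only [Finset.insert_subset_iff, Finset.singleton_subset_iff, ha', hb', hc', hd', he',
          hf', and_self]
      · simp [he1, he6]
      · rw [hda, Finset.card_pair nbc]
    · simp only [R, if_neg nbf, if_neg nbc]
      refine rel_bound hE b k hEk {a, c, d} ?_ ?_ 3 ?_
      · simp only [Finset.insert_subset_iff, Finset.singleton_subset_iff, ha', hb', hc', hd', he',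
          hf', and_self]
      · simp [he1.symm, he2, he7]
      · rw [hdb, Finset.card_eq_three.2 ⟨a, c, d, nac, nad, ncd, rfl⟩]
    · simp only [R, if_neg ncf, if_true]
      refine rel_bound hE c k hEk {a, b, d, e} ?_ ?_ 2 ?_
      · simp only [Finset.insert_subset_iff, Finset.singleton_subset_iff, ha', hb', hc', hd', he',
          hf', and_self]
      · simp [he6.symm, he2.symm, he3, he8]
      · rw [hdc, Finset.card_insert_of_notMem (by simp [nab, nac, nad, nae, naf, nbc, nbd, nbe, nbf, ncd, nce, ncf, nde,
      ndf, nef, nba, nca, nda, nea, nfa, ncb, ndb, neb, nfb, ndc, nec, nfc, ned, nfd, nfe]),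
          Finset.card_eq_three.2 ⟨b, d, e, nbd, nbe, nde, rfl⟩]
    · simp only [R, if_neg ndf, if_neg ndc]
      refine rel_bound hE d k hEk {b, c, e} ?_ ?_ 3 ?_
      · simp only [Finset.insert_subset_iff, Finset.singleton_subset_iff, ha', hb', hc', hd', he',
          hf', and_self]
      · simp [he7.symm, he3.symm, he4]
      · rw [hdd, Finset.card_eq_three.2 ⟨b, c, e, nbc, nbe, nce, rfl⟩]
    · simp only [R, if_neg nef, if_neg nec]
      refine rel_bound hE e k hEk {c, d, f} ?_ ?_ 3 ?_
      · simp only [Finset.insert_subset_iff, Finset.singleton_subset_iff, ha', hb', hc', hd', he',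
          hf', and_self]
      · simp [he8.symm, he4.symm, he5]
      · rw [hde, Finset.card_eq_three.2 ⟨c, d, f, ncd, ncf, ndf, rfl⟩]
    · simp only [R, if_true]
      refine rel_bound hE f k hEk {e} ?_ ?_ 4 ?_
      · simp only [Finset.insert_subset_iff, Finset.singleton_subset_iff, ha', hb', hc', hd', he',
          hf', and_self]
      · simp [he5.symm]
      · rw [hdf, Finset.card_singleton]
  obtain ⟨ψ, n, q, w, hr, hI, ho⟩ := main_phase hL T h Q s R hs hh α β E α 0 0 0
    (Reach.refl _ hα) (by
      intro v hv
      have := hR v hv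
      refine ⟨by simp, by simp, ?_, by simp, by simp⟩
      simp only [Pi.zero_apply]; omega) hE
  obtain ⟨n2, hr2, hn2, hpos⟩ := final_phase hL β hβ [f, e, d, b, c, a]
    hnd2 hd8 ψ hr.right (fun u hu => (ho u (by
      simp only [List.mem_cons, List.not_mem_nil, or_false, not_or] at hu
      simp [hT, hu])).1)
  have pf : n2 f ≤ 1 := hpos 0 (by simp)
  have pe : n2 e ≤ 2 := hpos 1 (by simp)
  have pd : n2 d ≤ 3 := hpos 2 (by simp)
  have pb : n2 b ≤ 4 := hpos 3 (by simp)
  have pc : n2 c ≤ 5 := hpos 4 (by simp)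
  have pa : n2 a ≤ 6 := hpos 5 (by simp)
  have hX : ∀ u, XX T h q u = (if a = u then q a else 0) + ((if c = u then q b else 0) +
      ((if c = u then q c else 0) + ((if c = u then q d else 0) + ((if c = u then q e else 0) +
      (if e = u then q f else 0))))) := by
    intro u
    unfold XX
    rw [Finset.sum_filter, hT, Finset.sum_insert (by simp [nab, nac, nad, nae, naf, nbc, nbd, nbe, nbf, ncd, nce, ncf, nde,
      ndf, nef, nba, nca, nda, nea, nfa, ncb, ndb, neb, nfb, ndc, nec, nfc, ned, nfd, nfe]), Finset.sum_insert (by simp [nab, nac, nad, nae, naf, nbc, nbd, nbe, nbf, ncd, nce, ncf, nde,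
      ndf, nef, nba, nca, nda, nea, nfa, ncb, ndb, neb, nfb, ndc, nec, nfc, ned, nfd, nfe]),
      Finset.sum_insert (by simp [nab, nac, nad, nae, naf, nbc, nbd, nbe, nbf, ncd, nce, ncf, nde,
      ndf, nef, nba, nca, nda, nea, nfa, ncb, ndb, neb, nfb, ndc, nec, nfc, ned, nfd, nfe]), Finset.sum_insert (by simp [nab, nac, nad, nae, naf, nbc, nbd, nbe, nbf, ncd, nce, ncf, nde,
      ndf, nef, nba, nca, nda, nea, nfa, ncb, ndb, neb, nfb, ndc, nec, nfc, ned, nfd, nfe]),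
      Finset.sum_insert (by simp [nab, nac, nad, nae, naf, nbc, nbd, nbe, nbf, ncd, nce, ncf, nde,
      ndf, nef, nba, nca, nda, nea, nfa, ncb, ndb, neb, nfb, ndc, nec, nfc, ned, nfd, nfe]), Finset.sum_singleton]
    simp [h, nab, nac, nad, nae, naf, nbc, nbd, nbe, nbf, ncd, nce, ncf, nde,
      ndf, nef, nba, nca, nda, nea, nfa, ncb, ndb, neb, nfb, ndc, nec, nfc, ned, nfd, nfe]
  have Ia := hI a ha'
  have Ib := hI b hb'
  have Ic := hI c hc'
  have Id := hI d hd'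
  have Ie := hI e he'
  have If := hI f hf'
  simp [Loc, hX, Q, s, R, rel, nab, nac, nad, nae, naf, nbc, nbd, nbe, nbf, ncd, nce, ncf, nde,
    ndf, nef, nba, nca, nda, nea, nfa, ncb, ndb, neb, nfb, ndc, nec, nfc, ned, nfd, nfe]
    at Ia Ib Ic Id Ie If
  obtain ⟨M, θ, hθ, hc⟩ := (hr.trans hr2).toSeq
  refine ⟨M, θ, hθ, fun u => ?_⟩
  rw [hc u, Pi.add_apply]
  by_cases hu : u ∈ T
  · exact hall (P := fun u => n u + n2 u ≤ k) (by omega) (by omega) (by omega) (by omega)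
      (by omega) (by omega) u hu
  · rw [(ho u hu).2, hn2 u (by
      simp only [hT, Finset.mem_insert, Finset.mem_singleton, not_or] at hu
      simp [hu])]
    simpa using hEk u hu
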